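/- arXiv:1506.02244 — 5 statements merged into one kernel-verified Lean document; each statement's English description precedes it below -/
import Mathlib

section
/- Let H and K be real Hilbert spaces, let T : H → H be a continuous linear operator that is symmetric and coercive (hence bijective with symmetric coercive inverse T⁻¹), and let η : K → H be a continuous linear map that is bounded below (there exists m > 0 with ‖η x‖ ≥ m‖x‖ for all x ∈ K). Set Tᵖ := η* ∘ T ∘ η and Sᵖ := η* ∘ T⁻¹ ∘ η, both of which are symmetric, coercive, continuous and bijective. Then Tᵖ and (Sᵖ)⁻¹ are spectrally equivalent: there exist constants c₁, c₂ > 0 such that c₁·⟨(Sᵖ)⁻¹x, x⟩ ≤ ⟨Tᵖx, x⟩ ≤ c₂·⟨(Sᵖ)⁻¹x, x⟩ for all x ∈ K. (This is the paper's claim that (Sᵖ)⁻¹ is 'usually not Tᵖ, although spectrally equivalent'.) -/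
open scoped RealInnerProductSpace

/-! A coercive operator stays coercive when it is compressed along a map bounded below, and when it
is inverted, because `⟪A⁻¹ x, x⟫` is the form of `A` at `A⁻¹ x` and `A⁻¹` is bounded below by
`‖A‖⁻¹`. Hence `Tᵖ`, `T⁻¹`, `Sᵖ` and `(Sᵖ)⁻¹` are all coercive, and the quadratic forms of two
bounded coercive operators are both comparable to `‖x‖²`. -/

section

open ContinuousLinearMap
open scoped NNReal

variable {𝕜 E F : Type*} [RCLike 𝕜]
  [NormedAddCommGroup E] [InnerProductSpace 𝕜 E]
  [NormedAddCommGroup F] [InnerProductSpace 𝕜 F]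

/-- Coercivity of a bounded operator, in the sense of the real part of its quadratic form;
Mathlib's `IsCoercive` is the analogous notion for real bilinear forms. -/
def IsCoerciveOperator (A : E →L[𝕜] E) : Prop :=
  ∃ c > 0, ∀ x, c * ‖x‖ ^ 2 ≤ A.reApplyInnerSelf x

/-- Spectral equivalence of two bounded operators: (the real parts of) their quadratic forms
dominate each other up to positive constants. -/
def SpectrallyEquivalent (A B : E →L[𝕜] E) : Prop :=
  ∃ c₁ c₂ : ℝ, 0 < c₁ ∧ 0 < c₂ ∧ ∀ x,
    c₁ * B.reApplyInnerSelf x ≤ A.reApplyInnerSelf x ∧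
    A.reApplyInnerSelf x ≤ c₂ * B.reApplyInnerSelf x

/-- The compression `η* ∘ A ∘ η` of an operator `A` along `η`, which is the projected operator `Aᵖ`
of the paper. -/
noncomputable def compression [CompleteSpace E] [CompleteSpace F]
    (η : F →L[𝕜] E) (A : E →L[𝕜] E) : F →L[𝕜] F :=
  (adjoint η).comp (A.comp η)

lemma reApplyInnerSelf_compression [CompleteSpace E] [CompleteSpace F]
    (η : F →L[𝕜] E) (A : E →L[𝕜] E) (x : F) :
    (compression η A).reApplyInnerSelf x = A.reApplyInnerSelf (η x) :=
  congrArg RCLike.re (adjoint_inner_left η x (A (η x)))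

lemma reApplyInnerSelf_le_opNorm_mul_norm_sq (A : E →L[𝕜] E) (x : E) :
    A.reApplyInnerSelf x ≤ ‖A‖ * ‖x‖ ^ 2 :=
  calc A.reApplyInnerSelf x ≤ ‖A x‖ * ‖x‖ := re_inner_le_norm (A x) x
    _ ≤ ‖A‖ * ‖x‖ * ‖x‖ := by gcongr; exact A.le_opNorm x
    _ = ‖A‖ * ‖x‖ ^ 2 := by ring

namespace IsCoerciveOperator

variable {A B : E →L[𝕜] E}

lemma exists_mul_norm_sq_le_of_antilipschitz (hA : IsCoerciveOperator A) {η : F →L[𝕜] E} {κ : ℝ≥0}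
    (hη : AntilipschitzWith κ η) : ∃ c > 0, ∀ x, c * ‖x‖ ^ 2 ≤ A.reApplyInnerSelf (η x) := by
  obtain ⟨c, hc, hcA⟩ := hA
  -- `κ` may vanish (when `F` is trivial), hence the shift by one.
  have norm_le (x : F) : ‖x‖ ≤ (κ + 1) * ‖η x‖ :=
    (η.bound_of_antilipschitz hη x).trans (by gcongr; simp)
  refine ⟨c / (κ + 1) ^ 2, by positivity, fun x => ?_⟩
  calc c / (κ + 1) ^ 2 * ‖x‖ ^ 2
      ≤ c / (κ + 1) ^ 2 * ((κ + 1) * ‖η x‖) ^ 2 := by gcongr; exact norm_le x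
    _ = c * ‖η x‖ ^ 2 := by field_simp
    _ ≤ A.reApplyInnerSelf (η x) := hcA (η x)

lemma compression [CompleteSpace E] [CompleteSpace F] (hA : IsCoerciveOperator A)
    {η : F →L[𝕜] E} {κ : ℝ≥0} (hη : AntilipschitzWith κ η) :
    IsCoerciveOperator (compression η A) := by
  simpa only [IsCoerciveOperator, reApplyInnerSelf_compression] using
    hA.exists_mul_norm_sq_le_of_antilipschitz hη

lemma of_rightInverse (hA : IsCoerciveOperator A) (hAB : Function.RightInverse B A) :
    IsCoerciveOperator B := by
  have form_eq (x : E) : A.reApplyInnerSelf (B x) = B.reApplyInnerSelf x := by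
    rw [reApplyInnerSelf_apply, reApplyInnerSelf_apply, hAB x, inner_re_symm]
  simpa only [IsCoerciveOperator, form_eq] using
    hA.exists_mul_norm_sq_le_of_antilipschitz (A.lipschitz.to_rightInverse hAB)

lemma exists_reApplyInnerSelf_le_mul (hB : IsCoerciveOperator B) (A : E →L[𝕜] E) :
    ∃ C > 0, ∀ x, A.reApplyInnerSelf x ≤ C * B.reApplyInnerSelf x := by
  obtain ⟨c, hc, hcB⟩ := hB
  refine ⟨(‖A‖ + 1) / c, by positivity, fun x => ?_⟩
  calc A.reApplyInnerSelf x ≤ ‖A‖ * ‖x‖ ^ 2 := reApplyInnerSelf_le_opNorm_mul_norm_sq A x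
    _ ≤ (‖A‖ + 1) * ‖x‖ ^ 2 := by gcongr; simp
    _ = (‖A‖ + 1) / c * (c * ‖x‖ ^ 2) := by field_simp
    _ ≤ (‖A‖ + 1) / c * B.reApplyInnerSelf x := by gcongr; exact hcB x

lemma spectrallyEquivalent (hA : IsCoerciveOperator A) (hB : IsCoerciveOperator B) :
    SpectrallyEquivalent A B := by
  obtain ⟨C₁, hC₁, hBA⟩ := hA.exists_reApplyInnerSelf_le_mul B
  obtain ⟨C₂, hC₂, hAB⟩ := hB.exists_reApplyInnerSelf_le_mul A
  exact ⟨C₁⁻¹, C₂, inv_pos.2 hC₁, hC₂, fun x => ⟨(inv_mul_le_iff₀ hC₁).2 (hBA x), hAB x⟩⟩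

end IsCoerciveOperator

theorem projected_DtN_spectrally_equivalent_inverse_projected_NtD_general
    [CompleteSpace E] [CompleteSpace F] {T S : E →L[𝕜] E} (hT : IsCoerciveOperator T)
    (hTS : Function.RightInverse S T) {η : F →L[𝕜] E} {κ : ℝ≥0} (hη : AntilipschitzWith κ η)
    {R : F →L[𝕜] F} (hR : Function.RightInverse R (compression η S)) :
    SpectrallyEquivalent (compression η T) R :=
  have hSp : IsCoerciveOperator (compression η S) := (hT.of_rightInverse hTS).compression hη
  (hT.compression hη).spectrallyEquivalent (hSp.of_rightInverse hR)

end

/-- With `T` symmetric coercive (hence invertible, with inverse `S`),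
`η` bounded below, `Tᵖ = η* ∘ T ∘ η` and `Sᵖ = η* ∘ S ∘ η` (the latter being
symmetric, coercive and bijective, with inverse `R = (Sᵖ)⁻¹`), the operators `Tᵖ`
and `(Sᵖ)⁻¹` are spectrally equivalent. -/
theorem projected_DtN_spectrally_equivalent_inverse_projected_NtD
    {H K : Type*} [NormedAddCommGroup H] [InnerProductSpace ℝ H] [CompleteSpace H]
    [NormedAddCommGroup K] [InnerProductSpace ℝ K] [CompleteSpace K]
    (T : H →L[ℝ] H)
    (hsymm : ∀ x y : H, ⟪T x, y⟫ = ⟪x, T y⟫)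
    (c : ℝ) (hc : 0 < c)
    (hcoer : ∀ x : H, ⟪T x, x⟫ ≥ c * ‖x‖ ^ 2)
    (η : K →L[ℝ] H)
    (m : ℝ) (hm : 0 < m)
    (hη : ∀ x : K, ‖η x‖ ≥ m * ‖x‖)
    -- `S = T⁻¹`, the (symmetric, coercive) inverse of `T`:
    (S : H →L[ℝ] H)
    (hS : ∀ x : H, S (T x) = x ∧ T (S x) = x)
    -- `R = (Sᵖ)⁻¹`, the inverse of the projected operator `Sᵖ = η* ∘ S ∘ η`:
    (R : K →L[ℝ] K)
    (hR : ∀ x : K,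
        R (((ContinuousLinearMap.adjoint η).comp (S.comp η)) x) = x ∧
        ((ContinuousLinearMap.adjoint η).comp (S.comp η)) (R x) = x) :
    ∃ c₁ c₂ : ℝ, 0 < c₁ ∧ 0 < c₂ ∧
      ∀ x : K,
        c₁ * ⟪R x, x⟫ ≤ ⟪((ContinuousLinearMap.adjoint η).comp (T.comp η)) x, x⟫ ∧
        ⟪((ContinuousLinearMap.adjoint η).comp (T.comp η)) x, x⟫ ≤ c₂ * ⟪R x, x⟫ :=
  projected_DtN_spectrally_equivalent_inverse_projected_NtD_general ⟨c, hc, hcoer⟩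
    (fun x => (hS x).2)
    (η.antilipschitz_of_bound (K := ⟨m⁻¹, by positivity⟩) fun x => (le_inv_mul_iff₀ hm).2 (hη x))
    (fun x => (hR x).2)
end

section
/- In the Lax–Milgram setup (H, K real Hilbert spaces, a : H × H → ℝ continuous symmetric coercive bilinear form, B : H → K surjective continuous linear map, U_w ∈ H the unique solution of a(U_w, V) = ⟨w, B V⟩ for all V ∈ H), the map Sᵖ : K → K, Sᵖw := B U_w, is a well-defined continuous linear operator which is symmetric (⟨Sᵖw, z⟩ = ⟨w, Sᵖz⟩ for all w, z ∈ K), coercive, and bijective. (This is the abstract form of the paper's projected Neumann-to-Dirichlet map Sᵖ = η⊤ ∘ γ₀ ∘ E_N ∘ η built from the elasticity bilinear form a and the trace map.) -/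
open scoped RealInnerProductSpace

/-!
Write `S w = B (E w)`. Testing the equation for `E z` with `V = E w` gives
`⟪S w, z⟫ = a (E z) (E w)`, so `S` is symmetric; an everywhere defined symmetric map on a Hilbert
space is linear, and continuous by Hellinger–Toeplitz.

The Cauchy–Schwarz inequality for `a` gives `|⟪w, B V⟫| ≤ √(a V V) * √⟪S w, w⟫`. Since `B` is onto,
the functionals `⟪w, ·⟫ / √⟪S w, w⟫` are pointwise bounded, hence bounded by Banach–Steinhaus:
`‖w‖ ≤ M * √⟪S w, w⟫`. This is coercivity of `S`, and Lax–Milgram makes `S` bijective.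
-/

section UniformBoundedness

variable {𝕜 ι : Type*} [RCLike 𝕜]

theorem exists_forall_opNorm_le_mul_of_forall_norm_le_mul {E F : Type*}
    [SeminormedAddCommGroup E] [NormedSpace 𝕜 E] [CompleteSpace E]
    [SeminormedAddCommGroup F] [NormedSpace 𝕜 F]
    {g : ι → E →L[𝕜] F} {q : ι → ℝ} (hq : ∀ i, 0 ≤ q i)
    (h : ∀ x, ∃ C, ∀ i, ‖g i x‖ ≤ C * q i) :
    ∃ M, 0 < M ∧ ∀ i, ‖g i‖ ≤ M * q i := by
  have hscale (i : ι) : ‖((q i : 𝕜))⁻¹‖ = (q i)⁻¹ := by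
    rw [norm_inv, RCLike.norm_of_nonneg (hq i)]
  have hpointwise : ∀ x, ∃ C, ∀ i, ‖((q i : 𝕜)⁻¹ • g i) x‖ ≤ C := fun x => by
    obtain ⟨C, hC⟩ := h x
    refine ⟨|C|, fun i => ?_⟩
    rw [smul_apply, norm_smul, hscale]
    refine inv_mul_le_of_le_mul₀ (hq i) (abs_nonneg C) ((hC i).trans ?_)
    rw [mul_comm]
    exact mul_le_mul_of_nonneg_left (le_abs_self C) (hq i)
  obtain ⟨M, hM⟩ := banach_steinhaus hpointwise
  refine ⟨max M 1, by positivity, fun i => ?_⟩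
  rcases (hq i).eq_or_lt with hzero | hpos
  · refine (g i).opNorm_le_bound (by simp [← hzero]) fun x => ?_
    obtain ⟨C, hC⟩ := h x
    simpa [← hzero] using hC i
  · have hMi : (q i)⁻¹ * ‖g i‖ ≤ M := by simpa only [norm_smul, hscale] using hM i
    rw [mul_comm, ← inv_mul_le_iff₀ hpos]
    exact hMi.trans (le_max_left M 1)

theorem exists_forall_norm_le_mul_of_forall_norm_inner_le_mul {K : Type*}
    [SeminormedAddCommGroup K] [InnerProductSpace 𝕜 K] [CompleteSpace K]
    {w : ι → K} {q : ι → ℝ} (hq : ∀ i, 0 ≤ q i)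
    (h : ∀ z, ∃ C, ∀ i, ‖inner 𝕜 (w i) z‖ ≤ C * q i) :
    ∃ M, 0 < M ∧ ∀ i, ‖w i‖ ≤ M * q i := by
  simpa only [innerSL_apply_norm] using
    exists_forall_opNorm_le_mul_of_forall_norm_le_mul (g := fun i => innerSL 𝕜 (w i)) hq h

end UniformBoundedness

theorem exists_continuousLinearMap_coe_eq_of_inner_symm {𝕜 K : Type*} [RCLike 𝕜]
    [NormedAddCommGroup K] [InnerProductSpace 𝕜 K] [CompleteSpace K]
    {S : K → K} (hS : ∀ w z, inner 𝕜 (S w) z = inner 𝕜 w (S z)) :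
    ∃ T : K →L[𝕜] K, ⇑T = S := by
  let T : K →ₗ[𝕜] K :=
    { toFun := S
      map_add' := fun w z => ext_inner_right 𝕜 fun v => by simp only [inner_add_left, hS]
      map_smul' := fun r w => ext_inner_right 𝕜 fun v => by
        simp only [inner_smul_left, hS, RingHom.id_apply] }
  have hT : T.IsSymmetric := hS
  exact ⟨⟨T, hT.continuous⟩, rfl⟩

theorem bijective_of_forall_mul_sq_norm_le_inner {K : Type*}
    [NormedAddCommGroup K] [InnerProductSpace ℝ K] [CompleteSpace K]
    {T : K →L[ℝ] K} {c : ℝ} (hc : 0 < c) (hT : ∀ w, c * ‖w‖ ^ 2 ≤ ⟪T w, w⟫) :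
    Function.Bijective T := by
  have hcoercive : IsCoercive ((innerSL ℝ).comp T) :=
    ⟨c, hc, fun w => by simpa [sq, mul_assoc] using hT w⟩
  have hT_eq : ⇑T = hcoercive.continuousLinearEquivOfBilin :=
    funext fun w => hcoercive.unique_continuousLinearEquivOfBilin fun _ => rfl
  rw [hT_eq]
  exact hcoercive.continuousLinearEquivOfBilin.bijective

section VariationalSolution

variable {H K : Type*} [AddCommGroup H] [Module ℝ H]
  [NormedAddCommGroup K] [InnerProductSpace ℝ K]
  {a : LinearMap.BilinForm ℝ H} {B : H → K} {E : K → H}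

theorem inner_apply_solution_eq (hE : ∀ w V, a (E w) V = ⟪w, B V⟫) (w z : K) :
    ⟪B (E w), z⟫ = a (E z) (E w) := by
  rw [real_inner_comm, hE]

theorem inner_apply_solution_comm (ha : a.IsSymm) (hE : ∀ w V, a (E w) V = ⟪w, B V⟫) (w z : K) :
    ⟪B (E w), z⟫ = ⟪w, B (E z)⟫ := by
  rw [inner_apply_solution_eq hE, ha.eq, hE]

theorem norm_inner_le_sqrt_mul_sqrt_inner_apply_solution (ha : a.IsPosSemidef)
    (hE : ∀ w V, a (E w) V = ⟪w, B V⟫) (w : K) (V : H) :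
    ‖⟪w, B V⟫‖ ≤ √(a V V) * √⟪B (E w), w⟫ := by
  rw [← hE, inner_apply_solution_eq hE, ← Real.sqrt_mul (ha.nonneg V), mul_comm]
  exact Real.abs_le_sqrt (a.apply_sq_le_of_symm ha.nonneg ⟨ha.eq⟩ (E w) V)

theorem exists_mul_sq_norm_le_inner_apply_solution [CompleteSpace K] (ha : a.IsPosSemidef)
    (hB : Function.Surjective B) (hE : ∀ w V, a (E w) V = ⟪w, B V⟫) :
    ∃ c, 0 < c ∧ ∀ w, c * ‖w‖ ^ 2 ≤ ⟪B (E w), w⟫ := by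
  obtain ⟨M, hM, hbound⟩ : ∃ M, 0 < M ∧ ∀ w, ‖w‖ ≤ M * √⟪B (E w), w⟫ :=
    exists_forall_norm_le_mul_of_forall_norm_inner_le_mul (𝕜 := ℝ) (fun _ => Real.sqrt_nonneg _) <|
      hB.forall.2 fun V =>
        ⟨√(a V V), fun w => norm_inner_le_sqrt_mul_sqrt_inner_apply_solution ha hE w V⟩
  have henergy (w : K) : 0 ≤ ⟪B (E w), w⟫ :=
    (ha.nonneg (E w)).trans_eq (inner_apply_solution_eq hE w w).symm
  refine ⟨(M ^ 2)⁻¹, by positivity, fun w => ?_⟩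
  rw [inv_mul_le_iff₀ (by positivity)]
  calc ‖w‖ ^ 2 ≤ (M * √⟪B (E w), w⟫) ^ 2 := by gcongr; exact hbound w
    _ = M ^ 2 * ⟪B (E w), w⟫ := by rw [mul_pow, Real.sq_sqrt (henergy w)]

end VariationalSolution

theorem neumann_to_dirichlet_operator_continuous_symmetric_coercive_bijective_general
    {H K : Type*} [AddCommGroup H] [Module ℝ H]
    [NormedAddCommGroup K] [InnerProductSpace ℝ K] [CompleteSpace K]
    {a : LinearMap.BilinForm ℝ H} (ha : a.IsPosSemidef)
    {B : H → K} (hB : Function.Surjective B)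
    {E : K → H} (hE : ∀ w V, a (E w) V = ⟪w, B V⟫) :
    ∃ Sp : K →L[ℝ] K,
      (∀ w, Sp w = B (E w)) ∧
      (∀ w z, ⟪Sp w, z⟫ = ⟪w, Sp z⟫) ∧
      (∃ c', 0 < c' ∧ ∀ w, ⟪Sp w, w⟫ ≥ c' * ‖w‖ ^ 2) ∧
      Function.Bijective Sp := by
  have hsymm : ∀ w z, ⟪B (E w), z⟫ = ⟪w, B (E z)⟫ := inner_apply_solution_comm ha.isSymm hE
  obtain ⟨Sp, hSp⟩ := exists_continuousLinearMap_coe_eq_of_inner_symm hsymm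
  have hSp_apply : ∀ w, Sp w = B (E w) := congrFun hSp
  obtain ⟨c', hc', hcoercive⟩ := exists_mul_sq_norm_le_inner_apply_solution ha hB hE
  simp only [← hSp_apply] at hsymm hcoercive
  exact ⟨Sp, hSp_apply, hsymm, ⟨c', hc', hcoercive⟩,
    bijective_of_forall_mul_sq_norm_le_inner hc' hcoercive⟩

/-- In the Lax–Milgram setup (`a` a continuous symmetric coercive
bilinear form on the real Hilbert space `H`, `B : H → K` a surjective continuous
linear map, `E w` the unique solution of `a(E w, V) = ⟪w, B V⟫` for all `V`), the
map `Sᵖ : K → K`, `Sᵖ w = B (E w)`, is a well-defined continuous linear operator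
which is symmetric, coercive and bijective. -/
theorem neumann_to_dirichlet_operator_continuous_symmetric_coercive_bijective
    {H K : Type*} [NormedAddCommGroup H] [InnerProductSpace ℝ H] [CompleteSpace H]
    [NormedAddCommGroup K] [InnerProductSpace ℝ K] [CompleteSpace K]
    (a : H →ₗ[ℝ] H →ₗ[ℝ] ℝ)
    (hcont : ∃ C : ℝ, ∀ x y : H, |a x y| ≤ C * ‖x‖ * ‖y‖)
    (hsymm : ∀ x y : H, a x y = a y x)
    (c : ℝ) (hc : 0 < c)
    (hcoer : ∀ x : H, a x x ≥ c * ‖x‖ ^ 2)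
    (B : H →L[ℝ] K) (hB : Function.Surjective B)
    (E : K → H)
    (hE : ∀ w : K, ∀ V : H, a (E w) V = ⟪w, B V⟫)
    (hEuniq : ∀ (w : K) (U : H), (∀ V : H, a U V = ⟪w, B V⟫) → U = E w) :
    ∃ Sp : K →L[ℝ] K,
      (∀ w : K, Sp w = B (E w)) ∧
      (∀ w z : K, ⟪Sp w, z⟫ = ⟪w, Sp z⟫) ∧
      (∃ c' : ℝ, 0 < c' ∧ ∀ w : K, ⟪Sp w, w⟫ ≥ c' * ‖w‖ ^ 2) ∧
      Function.Bijective Sp := by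
  have ha : LinearMap.BilinForm.IsPosSemidef a :=
    ⟨⟨hsymm⟩, ⟨fun x => (by positivity : 0 ≤ c * ‖x‖ ^ 2).trans (hcoer x)⟩⟩
  exact neumann_to_dirichlet_operator_continuous_symmetric_coercive_bijective_general ha hB hE
end

section
/- In the Lax–Milgram setup (H, K real Hilbert spaces, a : H × H → ℝ continuous symmetric coercive bilinear form, B : H → K surjective continuous linear map, U_w ∈ H the unique solution of a(U_w, V) = ⟨w, B V⟩ for all V ∈ H, Sᵖ : K → K given by Sᵖw := B U_w, which is symmetric, coercive and bijective), define the scalar product g^S(α, β) := ⟨α, (Sᵖ)⁻¹β⟩ on K. Then for all w ∈ K and all V ∈ H one has g^S(B U_w, B V) = a(U_w, V). (This is the paper's key identity g^S(u, v) = DJ_Γ[V] = DJ_Ω[V] = a(U, V) connecting the boundary metric g^S with the domain bilinear form and underpinning the domain-based quasi-Newton method.) -/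
open scoped RealInnerProductSpace

open LinearMap (BilinForm IsAdjointPair)

section AdjointPair

variable {𝕜 M N : Type*} [CommSemiring 𝕜] [AddCommMonoid M] [Module 𝕜 M]
  [AddCommMonoid N] [Module 𝕜 N] {p : BilinForm 𝕜 M} {q : BilinForm 𝕜 N}

theorem isAdjointPair_swap_of_isSymm (hp : p.IsSymm) (hq : q.IsSymm) {f : M → N} {g : N → M}
    (h : IsAdjointPair p q f g) : IsAdjointPair q p g f := fun y x ↦
  calc
    p (g y) x = p x (g y) := hp.eq (g y) x
    _ = q (f x) y := (h x y).symm
    _ = q y (f x) := hq.eq (f x) y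

theorem isAdjointPair_comp_self_of_isSymm (hp : p.IsSymm) (hq : q.IsSymm) {f : M → N}
    {g : N → M} (h : IsAdjointPair p q f g) : IsAdjointPair p p (g ∘ f) (g ∘ f) :=
  h.comp (isAdjointPair_swap_of_isSymm hp hq h)

theorem isAdjointPair_apply_rightInvOn {f : M → N} {g : N → M} (h : IsAdjointPair p q f g)
    {r : M → N} {s : Set M} (hr : Set.RightInvOn r g s) (x : M) {y : M} (hy : y ∈ s) :
    q (f x) (r y) = p x y := by
  rw [h, hr.eq hy]

end AdjointPair

/-- The variational equation `a (E w) V = p w (B V)` says that `E` and `B` form an adjoint pair.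
By symmetry of both forms the Neumann-to-Dirichlet operator `B ∘ E` is then self-adjoint, so it
can be moved across `p`, where its inverse cancels it. -/
theorem steklov_metric_equals_domain_bilinear_form_general
    {𝕜 H K : Type*} [CommSemiring 𝕜] [AddCommMonoid H] [Module 𝕜 H]
    [AddCommMonoid K] [Module 𝕜 K]
    {a : BilinForm 𝕜 H} (ha : a.IsSymm) {p : BilinForm 𝕜 K} (hp : p.IsSymm)
    {B : H → K} {E : K → H} (hE : IsAdjointPair p a E B)
    {R : K → K} (hR : Set.RightInvOn R (B ∘ E) (Set.range B)) (w : K) (V : H) :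
    p (B (E w)) (R (B V)) = a (E w) V :=
  have selfAdjoint : IsAdjointPair p p (B ∘ E) (B ∘ E) :=
    isAdjointPair_comp_self_of_isSymm hp ha hE
  calc
    p (B (E w)) (R (B V)) = p w (B V) :=
      isAdjointPair_apply_rightInvOn selfAdjoint hR w (Set.mem_range_self V)
    _ = a (E w) V := (hE w V).symm

/-- In the Lax–Milgram setup, with `Sᵖ w = B (E w)` the (symmetric,
coercive, bijective) Neumann-to-Dirichlet operator with continuous inverse `R`, the
scalar product `g^S(α, β) := ⟪α, R β⟫` satisfies the key identity
`g^S(B (E w), B V) = a (E w) V` for all `w ∈ K` and `V ∈ H`. -/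
theorem steklov_metric_equals_domain_bilinear_form
    {H K : Type*} [NormedAddCommGroup H] [InnerProductSpace ℝ H] [CompleteSpace H]
    [NormedAddCommGroup K] [InnerProductSpace ℝ K] [CompleteSpace K]
    (a : H →ₗ[ℝ] H →ₗ[ℝ] ℝ)
    (hcont : ∃ C : ℝ, ∀ x y : H, |a x y| ≤ C * ‖x‖ * ‖y‖)
    (hsymm : ∀ x y : H, a x y = a y x)
    (c : ℝ) (hc : 0 < c)
    (hcoer : ∀ x : H, a x x ≥ c * ‖x‖ ^ 2)
    (B : H →L[ℝ] K) (hB : Function.Surjective B)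
    (E : K → H)
    (hE : ∀ w : K, ∀ V : H, a (E w) V = ⟪w, B V⟫)
    (hEuniq : ∀ (w : K) (U : H), (∀ V : H, a U V = ⟪w, B V⟫) → U = E w)
    -- `Sᵖ`, the Neumann-to-Dirichlet operator `w ↦ B (E w)`:
    (Sp : K →L[ℝ] K) (hSp : ∀ w : K, Sp w = B (E w))
    -- `R = (Sᵖ)⁻¹`, the continuous inverse of `Sᵖ`:
    (R : K →L[ℝ] K)
    (hR : ∀ x : K, R (Sp x) = x ∧ Sp (R x) = x) :
    ∀ (w : K) (V : H), ⟪B (E w), R (B V)⟫ = a (E w) V :=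
  steklov_metric_equals_domain_bilinear_form_general ⟨hsymm⟩
    (LinearMap.BilinForm.isSymm_iff.mpr isSymm_inner) hE
    (fun x _ ↦ (hSp (R x)).symm.trans (hR x).2)
end

section
/- In the Lax–Milgram setup (H, K real Hilbert spaces, a : H × H → ℝ continuous symmetric coercive bilinear form, B : H → K surjective continuous linear map), let E_D : K → H denote the Dirichlet solution operator assigning to u ∈ K the unique U ∈ H with B U = u and a(U, V) = 0 for all V ∈ ker B, and let Sᵖ : K → K, Sᵖw := B U_w, be the Neumann-to-Dirichlet operator, where U_w solves a(U_w, V) = ⟨w, B V⟩ for all V ∈ H. Then: (i) for every u ∈ K there is a unique element T u ∈ K satisfying a(E_D u, V) = ⟨T u, B V⟩ for all V ∈ H, and the resulting Dirichlet-to-Neumann map T : K → K is linear; (ii) T ∘ Sᵖ = id_K and Sᵖ ∘ T = id_K, i.e., the Dirichlet-to-Neumann map is the inverse of the Neumann-to-Dirichlet map, T = S⁻¹. (Abstract form of the paper's generalization of Khoromskij–Wittum, theorem 2.3.1, from scalar fields to vector fields.) -/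
open scoped RealInnerProductSpace

/-!
A Dirichlet solution `U` makes the functional `a U` vanish on `ker B`, so `a U` factors through `B`;
by the open mapping theorem the factor is continuous, and its Riesz representative is the Neumann
datum of `U`. Conversely, a Neumann solution is the Dirichlet solution for its own trace. Hence the
Neumann-to-Dirichlet map is a linear bijection, and its inverse is the Dirichlet-to-Neumann map.
-/

section Factorization

variable {R E F G : Type*} [Ring R]
  [AddCommGroup E] [Module R E] [TopologicalSpace E]
  [AddCommGroup F] [Module R F] [TopologicalSpace F]
  [AddCommGroup G] [Module R G] [TopologicalSpace G]

theorem exists_continuousLinearMap_comp_eq_of_ker_le_ker {p : E →L[R] F}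
    (hp : Topology.IsQuotientMap p) {f : E →L[R] G} (hker : p.ker ≤ f.ker) :
    ∃ g : F →L[R] G, g ∘L p = f := by
  let e := (p : E →ₗ[R] F).quotKerEquivOfSurjective hp.surjective
  let g : F →ₗ[R] G := p.ker.liftQ f hker ∘ₗ e.symm
  have hg : ∀ x, g (p x) = f x := fun x => by
    have hx : e.symm (p x) = p.ker.mkQ x := e.symm_apply_eq.mpr rfl
    simp only [g, LinearMap.comp_apply, LinearEquiv.coe_coe, hx, Submodule.mkQ_apply,
      Submodule.liftQ_apply, ContinuousLinearMap.coe_coe]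
  have hg_cont : Continuous g := hp.continuous_iff.mpr (by
    simpa only [Function.comp_def, hg] using f.continuous)
  exact ⟨⟨g, hg_cont⟩, ContinuousLinearMap.ext hg⟩

end Factorization

section BoundaryValueProblems

variable {𝕜 H K : Type*} [RCLike 𝕜] [NormedAddCommGroup H] [NormedSpace 𝕜 H]
  [NormedAddCommGroup K] [InnerProductSpace 𝕜 K]
  {a : H →ₗ⋆[𝕜] H →ₗ[𝕜] 𝕜} {B : H →L[𝕜] K}

theorem exists_eq_inner_of_ker_le_ker [CompleteSpace H] [CompleteSpace K]
    (hB : Function.Surjective B) {f : H →L[𝕜] 𝕜} (hker : B.ker ≤ f.ker) :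
    ∃ t : K, ∀ V, f V = inner 𝕜 t (B V) := by
  obtain ⟨g, rfl⟩ := exists_continuousLinearMap_comp_eq_of_ker_le_ker (B.isQuotientMap hB) hker
  exact ⟨(InnerProductSpace.toDual 𝕜 K).symm g, fun V =>
    InnerProductSpace.toDual_symm_apply.symm⟩

/-- Weak solutions `U` of the Neumann problem with datum `w`. The form `a` is conjugate-linear in
its first argument, as the inner product is, so `U` depends linearly on `w`. -/
def IsNeumannSolution (a : H →ₗ⋆[𝕜] H →ₗ[𝕜] 𝕜) (B : H →L[𝕜] K) (w : K) (U : H) : Prop :=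
  ∀ V, a U V = inner 𝕜 w (B V)

/-- Weak solutions `U` of the Dirichlet problem with datum `u`, where `B` is the trace map and its
kernel is the space of test functions. -/
def IsDirichletSolution (a : H →ₗ⋆[𝕜] H →ₗ[𝕜] 𝕜) (B : H →L[𝕜] K) (u : K) (U : H) : Prop :=
  B U = u ∧ ∀ V, B V = 0 → a U V = 0

namespace IsNeumannSolution

variable {w w' : K} {U U' : H}

theorem add (h : IsNeumannSolution a B w U) (h' : IsNeumannSolution a B w' U') :
    IsNeumannSolution a B (w + w') (U + U') := fun V => by
  rw [map_add, LinearMap.add_apply, h, h', inner_add_left]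

theorem smul (r : 𝕜) (h : IsNeumannSolution a B w U) :
    IsNeumannSolution a B (r • w) (r • U) := fun V => by
  rw [map_smulₛₗ, LinearMap.smul_apply, h, inner_smul_left, smul_eq_mul]

theorem datum_unique (hB : DenseRange B) (h : IsNeumannSolution a B w U)
    (h' : IsNeumannSolution a B w' U) : w = w' :=
  hB.eq_of_inner_left 𝕜 fun V => (h V).symm.trans (h' V)

theorem isDirichletSolution (h : IsNeumannSolution a B w U) : IsDirichletSolution a B (B U) U :=
  ⟨rfl, fun V hV => by rw [h, hV, inner_zero_right]⟩

end IsNeumannSolution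

theorem IsDirichletSolution.exists_isNeumannSolution [CompleteSpace H] [CompleteSpace K]
    (hB : Function.Surjective B) {u : K} {U : H} (haU : Continuous (a U))
    (h : IsDirichletSolution a B u U) : ∃ t, IsNeumannSolution a B t U :=
  exists_eq_inner_of_ker_le_ker (f := ⟨a U, haU⟩) hB h.2

variable {E ED : K → H}

theorem isLinearMap_of_isNeumannSolution (hE : ∀ w, IsNeumannSolution a B w (E w))
    (hEuniq : ∀ w U, IsNeumannSolution a B w U → U = E w) : IsLinearMap 𝕜 E where
  map_add w w' := (hEuniq _ _ ((hE w).add (hE w'))).symm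
  map_smul r w := (hEuniq _ _ ((hE w).smul r)).symm

/-- The Neumann-to-Dirichlet map `w ↦ B (E w)`, where `E` is the Neumann solution operator. -/
def neumannToDirichlet (hE : ∀ w, IsNeumannSolution a B w (E w))
    (hEuniq : ∀ w U, IsNeumannSolution a B w U → U = E w) : K →ₗ[𝕜] K :=
  B.toLinearMap ∘ₗ (isLinearMap_of_isNeumannSolution hE hEuniq).mk' E

theorem IsNeumannSolution.neumannToDirichlet_eq (hE : ∀ w, IsNeumannSolution a B w (E w))
    (hEuniq : ∀ w U, IsNeumannSolution a B w U → U = E w) {w : K} {U : H}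
    (h : IsNeumannSolution a B w U) : neumannToDirichlet hE hEuniq w = B U :=
  congrArg B (hEuniq w U h).symm

theorem neumannToDirichlet_injective (hB : DenseRange B)
    (hE : ∀ w, IsNeumannSolution a B w (E w))
    (hEuniq : ∀ w U, IsNeumannSolution a B w U → U = E w)
    (hEDuniq : ∀ u U, IsDirichletSolution a B u U → U = ED u) :
    Function.Injective (neumannToDirichlet hE hEuniq) := by
  intro w w' (htrace : B (E w) = B (E w'))
  have hEw : E w = ED (B (E w)) := hEDuniq _ _ (hE w).isDirichletSolution
  have hEw' : E w' = ED (B (E w')) := hEDuniq _ _ (hE w').isDirichletSolution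
  have hsol : E w = E w' := by rw [hEw, htrace, ← hEw']
  exact (hE w).datum_unique hB (hsol ▸ hE w')

theorem neumannToDirichlet_surjective [CompleteSpace H] [CompleteSpace K]
    (ha : ∀ U, Continuous (a U)) (hB : Function.Surjective B)
    (hE : ∀ w, IsNeumannSolution a B w (E w))
    (hEuniq : ∀ w U, IsNeumannSolution a B w U → U = E w)
    (hED : ∀ u, IsDirichletSolution a B u (ED u)) :
    Function.Surjective (neumannToDirichlet hE hEuniq) := fun u => by
  obtain ⟨t, ht⟩ := (hED u).exists_isNeumannSolution hB (ha _)
  exact ⟨t, (ht.neumannToDirichlet_eq hE hEuniq).trans (hED u).1⟩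

theorem dirichlet_to_neumann_is_inverse_of_neumann_to_dirichlet_general
    [CompleteSpace H] [CompleteSpace K]
    (ha : ∀ U, Continuous (a U)) (hB : Function.Surjective B)
    (hE : ∀ w, IsNeumannSolution a B w (E w))
    (hEuniq : ∀ w U, IsNeumannSolution a B w U → U = E w)
    (hED : ∀ u, IsDirichletSolution a B u (ED u))
    (hEDuniq : ∀ u U, IsDirichletSolution a B u U → U = ED u) :
    (∀ u, ∃! t, IsNeumannSolution a B t (ED u)) ∧
    ∃ T : K →ₗ[𝕜] K,
      (∀ u, IsNeumannSolution a B (T u) (ED u)) ∧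
      (∀ w, T (B (E w)) = w) ∧
      (∀ u, B (E (T u)) = u) := by
  have hex : ∀ u, ∃ t, IsNeumannSolution a B t (ED u) := fun u =>
    (hED u).exists_isNeumannSolution hB (ha _)
  let S : K ≃ₗ[𝕜] K := .ofBijective (neumannToDirichlet hE hEuniq)
    ⟨neumannToDirichlet_injective hB.denseRange hE hEuniq hEDuniq,
      neumannToDirichlet_surjective ha hB hE hEuniq hED⟩
  refine ⟨fun u => ?unique_datum, S.symm, fun u => ?datum, S.symm_apply_apply, S.apply_symm_apply⟩
  case unique_datum =>
    obtain ⟨t, ht⟩ := hex u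
    exact ⟨t, ht, fun t' ht' => ht'.datum_unique hB.denseRange ht⟩
  case datum =>
    obtain ⟨t, ht⟩ := hex u
    have hSt : S t = u := (ht.neumannToDirichlet_eq hE hEuniq).trans (hED u).1
    have hSu : S.symm u = t := S.symm_apply_eq.mpr hSt.symm
    exact hSu.symm ▸ ht

end BoundaryValueProblems

/-- In the Lax–Milgram setup, with `ED` the Dirichlet solution operator
and `Sᵖ w = B (E w)` the Neumann-to-Dirichlet operator: (i) for every `u` there is a
unique `t ∈ K` with `a (ED u) V = ⟪t, B V⟫` for all `V`, and the resulting
Dirichlet-to-Neumann map `T` is linear; (ii) `T ∘ Sᵖ = id` and `Sᵖ ∘ T = id`,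
i.e. `T = S⁻¹`. -/
theorem dirichlet_to_neumann_is_inverse_of_neumann_to_dirichlet
    {H K : Type*} [NormedAddCommGroup H] [InnerProductSpace ℝ H] [CompleteSpace H]
    [NormedAddCommGroup K] [InnerProductSpace ℝ K] [CompleteSpace K]
    (a : H →ₗ[ℝ] H →ₗ[ℝ] ℝ)
    (hcont : ∃ C : ℝ, ∀ x y : H, |a x y| ≤ C * ‖x‖ * ‖y‖)
    (hsymm : ∀ x y : H, a x y = a y x)
    (c : ℝ) (hc : 0 < c)
    (hcoer : ∀ x : H, a x x ≥ c * ‖x‖ ^ 2)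
    (B : H →L[ℝ] K) (hB : Function.Surjective B)
    -- the Neumann solution operator `E = E_N`:
    (E : K → H)
    (hE : ∀ w : K, ∀ V : H, a (E w) V = ⟪w, B V⟫)
    (hEuniq : ∀ (w : K) (U : H), (∀ V : H, a U V = ⟪w, B V⟫) → U = E w)
    -- the Dirichlet solution operator `ED = E_D`:
    (ED : K → H)
    (hED : ∀ u : K, B (ED u) = u ∧ ∀ V : H, B V = 0 → a (ED u) V = 0)
    (hEDuniq : ∀ (u : K) (U : H),
        (B U = u ∧ ∀ V : H, B V = 0 → a U V = 0) → U = ED u) :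
    -- (i) well-posedness of the Dirichlet-to-Neumann map
    (∀ u : K, ∃! t : K, ∀ V : H, a (ED u) V = ⟪t, B V⟫) ∧
    -- the resulting Dirichlet-to-Neumann map is linear, and (ii) it inverts `Sᵖ`
    (∃ T : K →ₗ[ℝ] K,
      (∀ (u : K) (V : H), a (ED u) V = ⟪T u, B V⟫) ∧
      (∀ w : K, T (B (E w)) = w) ∧
      (∀ u : K, B (E (T u)) = u)) := by
  obtain ⟨C, hC⟩ := hcont
  -- Conjugation on `ℝ` unfolds to the identity, so `a` can be passed as a sesquilinear form.
  exact dirichlet_to_neumann_is_inverse_of_neumann_to_dirichlet_general (𝕜 := ℝ) (a := a)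
    (fun U => AddMonoidHomClass.continuous_of_bound (a U) _ (hC U)) hB hE hEuniq hED hEDuniq
end

section
/- In the Lax–Milgram setup (H, K real Hilbert spaces, a : H × H → ℝ continuous symmetric coercive bilinear form, B : H → K surjective continuous linear map, U_w ∈ H the unique solution of a(U_w, V) = ⟨w, B V⟩ for all V ∈ H), let H_Γ := {U_w : w ∈ K} ⊆ H. Then: (i) H_Γ is a closed linear subspace of H; (ii) the a-orthogonal complement of H_Γ equals ker B, i.e., {V ∈ H : a(U, V) = 0 for all U ∈ H_Γ} = ker B; (iii) every U ∈ H admits a unique decomposition U = U₁ + U₂ with U₁ ∈ H_Γ and U₂ ∈ ker B, and this decomposition is a-orthogonal: a(U₁, U₂) = 0. (This is the paper's decomposition H¹₀(Ω, ℝᵈ) = H_Γint ⊕ H_Γint^⊥ used to show that the quasi-Newton iteration acts only on the coercive part of the shape Hessian.) -/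
/-!
Write `E` for the Neumann extension operator `w ↦ U_w`. Pairing `E w` with a preimage of `z` under
`B` gives `|⟪w, z⟫| ≤ C_z ‖E w‖`, so `‖w‖ ≤ M ‖E w‖` by the uniform boundedness principle, and
`⟪B (E w), w⟫ = a (E w) (E w)` is coercive in `w`. By Lax–Milgram on `K`, the Neumann-to-Dirichlet
operator `B ∘ E` is therefore invertible, and `E ∘ (B ∘ E)⁻¹ ∘ B` is a continuous projection onto
the range of `E` along the kernel of `B`.
-/

open Function

open scoped RealInnerProductSpace

theorem banach_steinhaus_of_le_mul {𝕜 E F ι : Type*} [RCLike 𝕜]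
    [SeminormedAddCommGroup E] [NormedSpace 𝕜 E] [CompleteSpace E]
    [SeminormedAddCommGroup F] [NormedSpace 𝕜 F] {g : ι → E →L[𝕜] F} {p : ι → ℝ}
    (hp : ∀ i, 0 ≤ p i) (h : ∀ x, ∃ C, ∀ i, ‖g i x‖ ≤ C * p i) :
    ∃ C > 0, ∀ i, ‖g i‖ ≤ C * p i := by
  obtain ⟨C, hC⟩ : ∃ C, ∀ i, ‖((p i)⁻¹ : 𝕜) • g i‖ ≤ C := by
    refine banach_steinhaus fun x => ?_
    obtain ⟨C, hC⟩ := h x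
    refine ⟨|C|, fun i => ?_⟩
    rw [smul_apply, norm_smul, norm_inv, RCLike.norm_of_nonneg (hp i)]
    refine inv_mul_le_of_le_mul₀ (hp i) (abs_nonneg C) ((hC i).trans ?_)
    rw [mul_comm]
    exact mul_le_mul_of_nonneg_left (le_abs_self C) (hp i)
  refine ⟨max C 1, by positivity, fun i => ?_⟩
  rcases (hp i).eq_or_lt with hi | hi
  · refine (g i).opNorm_le_bound (by rw [← hi, mul_zero]) fun x => ?_
    obtain ⟨D, hD⟩ := h x
    simpa [← hi] using hD i
  · have hgi := (hC i).trans (le_max_left C 1)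
    rwa [norm_smul, norm_inv, RCLike.norm_of_nonneg (hp i), inv_mul_le_iff₀' hi] at hgi

theorem isCompl_range_ker_of_bijective_comp {R M N P : Type*} [Ring R]
    [AddCommGroup M] [Module R M] [AddCommGroup N] [Module R N] [AddCommGroup P] [Module R P]
    {f : M →ₗ[R] N} {g : N →ₗ[R] P} (h : Bijective (g ∘ₗ f)) :
    IsCompl (LinearMap.range f) (LinearMap.ker g) := by
  refine ⟨Submodule.disjoint_def.2 ?_, Submodule.codisjoint_iff_exists_add_eq.2 fun y => ?_⟩
  · rintro _ ⟨x, rfl⟩ hx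
    rw [(map_eq_zero_iff (g ∘ₗ f) h.injective).1 hx, map_zero]
  · obtain ⟨x, hx⟩ := h.surjective (g y)
    refine ⟨f x, y - f x, ⟨x, rfl⟩, ?_, add_sub_cancel _ _⟩
    rw [LinearMap.mem_ker, map_sub, sub_eq_zero]
    exact hx.symm

theorem exists_antilipschitzWith_of_isCoercive {H : Type*} [SeminormedAddCommGroup H]
    [NormedSpace ℝ H] {a : H →L[ℝ] H →L[ℝ] ℝ} (ha : IsCoercive a) :
    ∃ C, AntilipschitzWith C a := by
  obtain ⟨c, hc, hcoer⟩ := ha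
  refine ⟨⟨c⁻¹, by positivity⟩, a.antilipschitz_of_bound fun x => ?_⟩
  change ‖x‖ ≤ c⁻¹ * ‖a x‖
  rw [le_inv_mul_iff₀ hc]
  rcases (norm_nonneg x).eq_or_lt with hx | hx
  · simp [← hx]
  · refine le_of_mul_le_mul_right ?_ hx
    calc c * ‖x‖ * ‖x‖ ≤ a x x := hcoer x
      _ ≤ ‖a x x‖ := Real.le_norm_self _
      _ ≤ ‖a x‖ * ‖x‖ := (a x).le_opNorm x

theorem isInvertible_of_isCoercive_innerSL_comp {K : Type*} [NormedAddCommGroup K]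
    [InnerProductSpace ℝ K] [CompleteSpace K] {T : K →L[ℝ] K}
    (hT : IsCoercive (innerSL ℝ ∘L T)) : T.IsInvertible :=
  ⟨hT.continuousLinearEquivOfBilin, ContinuousLinearMap.ext fun _ =>
    (hT.unique_continuousLinearEquivOfBilin fun _ => rfl).symm⟩

section NeumannExtension

variable {H K : Type*} [NormedAddCommGroup H] [NormedSpace ℝ H]
  [NormedAddCommGroup K] [InnerProductSpace ℝ K]

/-- `E w` is a weak solution `U` of the Neumann problem `a(U, V) = ⟪w, B V⟫` for all `V`, for every
boundary force `w`. The solution operator `E` is encoded as a bare function. -/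
def IsNeumannExtension (a : H →L[ℝ] H →L[ℝ] ℝ) (B : H →L[ℝ] K) (E : K → H) : Prop :=
  ∀ w V, a (E w) V = ⟪w, B V⟫

namespace IsNeumannExtension

variable {a : H →L[ℝ] H →L[ℝ] ℝ} {B : H →L[ℝ] K}

theorem apply_eq_innerSL_comp {E : K → H} (hE : IsNeumannExtension a B E) (w : K) :
    a (E w) = innerSL ℝ w ∘L B :=
  ContinuousLinearMap.ext (hE w)

theorem apply_eq_zero {E : K → H} (hE : IsNeumannExtension a B E) (w : K) {V : H}
    (hV : B V = 0) : a (E w) V = 0 := by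
  rw [hE, hV, inner_zero_right]

theorem orthogonal_range_eq_ker {E : K → H} (hE : IsNeumannExtension a B E) :
    {V | ∀ U ∈ Set.range E, a U V = 0} = {V | B V = 0} := by
  ext V
  simp only [Set.forall_mem_range, Set.mem_ofPred_eq]
  refine ⟨fun h => ?_, fun hV w => hE.apply_eq_zero w hV⟩
  rw [← inner_self_eq_zero (𝕜 := ℝ), ← hE]
  exact h (B V)

theorem exists_continuousLinearMap_coe_eq {E : K → H} (hE : IsNeumannExtension a B E)
    (ha : IsCoercive a) : ∃ L : K →L[ℝ] H, ⇑L = E := by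
  obtain ⟨C, hC⟩ := exists_antilipschitzWith_of_isCoercive ha
  have hcont : Continuous E := by
    refine (hC.isUniformInducing a.uniformContinuous).isInducing.continuous_iff.2 ?_
    simp only [comp_def, hE.apply_eq_innerSL_comp]
    fun_prop
  exact ⟨{
    toFun := E
    map_add' := fun w z => hC.injective (by simp [hE.apply_eq_innerSL_comp])
    map_smul' := fun r w => hC.injective (by simp [hE.apply_eq_innerSL_comp])
    cont := hcont }, rfl⟩

variable [CompleteSpace K]

theorem exists_norm_le_mul_norm {E : K → H} (hE : IsNeumannExtension a B E)
    (hB : Surjective B) : ∃ M > 0, ∀ w, ‖w‖ ≤ M * ‖E w‖ := by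
  obtain ⟨M, hM, hbound⟩ : ∃ M > 0, ∀ w, ‖innerSL ℝ w‖ ≤ M * ‖E w‖ := by
    refine banach_steinhaus_of_le_mul (fun w => norm_nonneg (E w)) fun z => ?_
    obtain ⟨V, rfl⟩ := hB z
    refine ⟨‖a‖ * ‖V‖, fun w => ?_⟩
    calc ‖innerSL ℝ w (B V)‖ = ‖a (E w) V‖ := by rw [innerSL_apply_apply, hE]
      _ ≤ ‖a‖ * ‖E w‖ * ‖V‖ := a.le_opNorm₂ (E w) V
      _ = ‖a‖ * ‖V‖ * ‖E w‖ := by ring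
  exact ⟨M, hM, fun w => (innerSL_apply_norm ℝ w).symm.trans_le (hbound w)⟩

variable {E : K →L[ℝ] H}

theorem isCoercive_innerSL_comp (hE : IsNeumannExtension a B E) (ha : IsCoercive a)
    (hB : Surjective B) : IsCoercive (innerSL ℝ ∘L (B ∘L E)) := by
  obtain ⟨c, hc, hcoer⟩ := ha
  obtain ⟨M, hM, hbound⟩ := hE.exists_norm_le_mul_norm hB
  refine ⟨c / M ^ 2, by positivity, fun w => ?_⟩
  calc c / M ^ 2 * ‖w‖ * ‖w‖ ≤ c / M ^ 2 * (M * ‖E w‖) * (M * ‖E w‖) := by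
        gcongr <;> exact hbound w
    _ = c * ‖E w‖ * ‖E w‖ := by field_simp
    _ ≤ a (E w) (E w) := hcoer (E w)
    _ = ⟪B (E w), w⟫ := by rw [hE, real_inner_comm]

theorem isInvertible_comp (hE : IsNeumannExtension a B E) (ha : IsCoercive a)
    (hB : Surjective B) : (B ∘L E).IsInvertible :=
  isInvertible_of_isCoercive_innerSL_comp (hE.isCoercive_innerSL_comp ha hB)

theorem isClosed_range (hE : IsNeumannExtension a B E) (ha : IsCoercive a)
    (hB : Surjective B) : IsClosed (Set.range E) :=
  (ContinuousLinearMap.HasLeftInverse.of_comp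
    (.of_isInvertible (hE.isInvertible_comp ha hB))).isClosed_range

theorem isCompl_range_ker (hE : IsNeumannExtension a B E) (ha : IsCoercive a)
    (hB : Surjective B) : IsCompl E.range B.ker :=
  isCompl_range_ker_of_bijective_comp (hE.isInvertible_comp ha hB).bijective

end IsNeumannExtension

theorem neumann_extension_space_a_orthogonal_decomposition_general [CompleteSpace K]
    (a : H →L[ℝ] H →L[ℝ] ℝ) (ha : IsCoercive a) (B : H →L[ℝ] K) (hB : Surjective B)
    (E : K → H) (hE : IsNeumannExtension a B E) :
    (∃ M : Submodule ℝ H, (M : Set H) = Set.range E ∧ IsClosed (M : Set H)) ∧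
    ({V : H | ∀ U ∈ Set.range E, a U V = 0} = {V : H | B V = 0}) ∧
    (∀ U : H,
      (∃! p : H × H, p.1 ∈ Set.range E ∧ B p.2 = 0 ∧ U = p.1 + p.2) ∧
      (∀ p : H × H, p.1 ∈ Set.range E → B p.2 = 0 → U = p.1 + p.2 →
        a p.1 p.2 = 0)) := by
  obtain ⟨E, rfl⟩ := hE.exists_continuousLinearMap_coe_eq ha
  refine ⟨⟨E.range, rfl, hE.isClosed_range ha hB⟩, hE.orthogonal_range_eq_ker, fun U => ⟨?_, ?_⟩⟩
  · obtain ⟨U₁, U₂, hU, huniq⟩ :=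
      Submodule.existsUnique_add_of_isCompl (hE.isCompl_range_ker ha hB) U
    refine ⟨(U₁, U₂), ⟨U₁.2, U₂.2, hU.symm⟩, ?_⟩
    rintro ⟨V₁, V₂⟩ ⟨hV₁, hV₂, hV⟩
    obtain ⟨rfl, rfl⟩ := huniq ⟨V₁, hV₁⟩ ⟨V₂, hV₂⟩ hV.symm
    rfl
  · rintro ⟨_, V⟩ ⟨w, rfl⟩ hV -
    exact hE.apply_eq_zero w hV

end NeumannExtension

/-- In the Lax–Milgram setup, the space `H_Γ = {E w : w ∈ K}` of
Neumann extensions is a closed linear subspace of `H`, its `a`-orthogonal complement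
is `ker B`, and every `U ∈ H` has a unique (and `a`-orthogonal) decomposition
`U = U₁ + U₂` with `U₁ ∈ H_Γ` and `U₂ ∈ ker B`. -/
theorem neumann_extension_space_a_orthogonal_decomposition
    {H K : Type*} [NormedAddCommGroup H] [InnerProductSpace ℝ H] [CompleteSpace H]
    [NormedAddCommGroup K] [InnerProductSpace ℝ K] [CompleteSpace K]
    (a : H →ₗ[ℝ] H →ₗ[ℝ] ℝ)
    (hcont : ∃ C : ℝ, ∀ x y : H, |a x y| ≤ C * ‖x‖ * ‖y‖)
    (hsymm : ∀ x y : H, a x y = a y x)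
    (c : ℝ) (hc : 0 < c)
    (hcoer : ∀ x : H, a x x ≥ c * ‖x‖ ^ 2)
    (B : H →L[ℝ] K) (hB : Function.Surjective B)
    (E : K → H)
    (hE : ∀ w : K, ∀ V : H, a (E w) V = ⟪w, B V⟫)
    (hEuniq : ∀ (w : K) (U : H), (∀ V : H, a U V = ⟪w, B V⟫) → U = E w) :
    -- (i) `H_Γ := range E` is a closed linear subspace of `H`
    (∃ M : Submodule ℝ H, (M : Set H) = Set.range E ∧ IsClosed (M : Set H)) ∧
    -- (ii) the `a`-orthogonal complement of `H_Γ` equals `ker B`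
    ({V : H | ∀ U ∈ Set.range E, a U V = 0} = {V : H | B V = 0}) ∧
    -- (iii) unique decomposition, which is `a`-orthogonal
    (∀ U : H,
      (∃! p : H × H, p.1 ∈ Set.range E ∧ B p.2 = 0 ∧ U = p.1 + p.2) ∧
      (∀ p : H × H, p.1 ∈ Set.range E → B p.2 = 0 → U = p.1 + p.2 →
        a p.1 p.2 = 0)) := by
  obtain ⟨C, hC⟩ := hcont
  exact neumann_extension_space_a_orthogonal_decomposition_general (a.mkContinuous₂ C hC)
    ⟨c, hc, fun x => by simpa only [mul_assoc, ← sq] using! hcoer x⟩ B hB E hE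
end
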